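/- Let μ be the measure on ℝⁿ given by dμ(x)=φ(x)dx, where φ is a p-concave function with −1/n ≤ p ≤ ∞. Let λ∈(0,1) and let A,B⊆ℝⁿ be non-empty measurable sets such that (1−λ)A+λB is also measurable and such that, for some linear hyperplane H of ℝⁿ, sup_{y∈H^⊥} μ̃_{n−1}(A∩(y+H)) = sup_{y∈H^⊥} μ̃_{n−1}(B∩(y+H)). Then μ((1−λ)A+λB) ≥ (1−λ)μ(A) + λμ(B). -/

import Mathlib

open MeasureTheory Set Metric Filter
open scoped ENNReal NNReal Topology Pointwise

noncomputable section

/-- The `d`-convex combination `(1-λ)A ⋆_d λB` of two sets. -/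
def starComb {Z : Type*} (d : Z → Z → ℝ) (lam : ℝ) (A B : Set Z) : Set Z :=
  {z | ∃ a ∈ A, ∃ b ∈ B, d z a = lam * d a b ∧ d z b = (1 - lam) * d a b}

/-- A distance is strictly intrinsic: closed balls of radii summing to the distance
between their centers intersect. -/
def StrictlyIntrinsicDist {Z : Type*} (d : Z → Z → ℝ) : Prop :=
  ∀ x y : Z, ∀ r₁ r₂ : ℝ, 0 ≤ r₁ → 0 ≤ r₂ → r₁ + r₂ = d x y →
    ∃ z : Z, d z x ≤ r₁ ∧ d z y ≤ r₂

/-- The ℓ² (Euclidean) product metric on `X × Y`. -/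
def rho {X Y : Type*} [PseudoMetricSpace X] [PseudoMetricSpace Y] (a b : X × Y) : ℝ :=
  Real.sqrt (dist a.1 b.1 ^ 2 + dist a.2 b.2 ^ 2)

/-- The ℓ² (Euclidean) metric on a finite product of copies of a metric space. -/
def rhoPi {ι : Type*} [Fintype ι] {X : Type*} [PseudoMetricSpace X] (a b : ι → X) : ℝ :=
  Real.sqrt (∑ i, dist (a i) (b i) ^ 2)

open Classical in
/-- The `p`-th mean `M_p(a,b,λ)` of `a, b ∈ [0,∞]`, for `p ∈ ℝ ∪ {±∞}`, with the
convention that it vanishes whenever `a * b = 0`. -/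
def Mp (p : EReal) (lam : ℝ) (a b : ℝ≥0∞) : ℝ≥0∞ :=
  if a = 0 ∨ b = 0 then 0
  else if p = ⊤ then max a b
  else if p = ⊥ then min a b
  else if p = 0 then a ^ (1 - lam) * b ^ lam
  else (ENNReal.ofReal (1 - lam) * a ^ p.toReal + ENNReal.ofReal lam * b ^ p.toReal) ^ (1 / p.toReal)

open Classical in
/-- The `p`-th mean `M_p(a,b,λ)` of nonnegative reals, with the zero convention. -/
def MpR (p : EReal) (lam a b : ℝ) : ℝ :=
  if a = 0 ∨ b = 0 then 0
  else if p = ⊤ then max a b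
  else if p = ⊥ then min a b
  else if p = 0 then a ^ (1 - lam) * b ^ lam
  else ((1 - lam) * a ^ p.toReal + lam * b ^ p.toReal) ^ (1 / p.toReal)

/-- `(X,d,μ)` satisfies `BM(p)`. -/
def SatisfiesBM {X : Type*} [MeasurableSpace X] (d : X → X → ℝ) (μ : Measure X)
    (p : EReal) : Prop :=
  ∀ lam : ℝ, lam ∈ Ioo (0:ℝ) 1 → ∀ A B C : Set X, A.Nonempty → B.Nonempty →
    MeasurableSet A → MeasurableSet B → MeasurableSet C →
    μ A ≠ 0 → μ B ≠ 0 → starComb d lam A B ⊆ C →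
    Mp p lam (μ A) (μ B) ≤ μ C

/-- `(X,d,μ)` satisfies the general (linear) inequality `B̄M(1)`:
`μ(C) ≥ (1-λ)μ(A) + λμ(B)` for all nonempty measurable `A, B, C` with
`C ⊇ (1-λ)A ⋆ λB`. -/
def SatisfiesBMbarLinear {X : Type*} [MeasurableSpace X] (d : X → X → ℝ)
    (μ : Measure X) : Prop :=
  ∀ lam : ℝ, lam ∈ Ioo (0:ℝ) 1 → ∀ A B C : Set X, A.Nonempty → B.Nonempty →
    MeasurableSet A → MeasurableSet B → MeasurableSet C →
    starComb d lam A B ⊆ C →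
    ENNReal.ofReal (1 - lam) * μ A + ENNReal.ofReal lam * μ B ≤ μ C

/-- `(X,d,μ)` satisfies the general inequality `B̄M(p)` for a real `p > 0`:
`μ(C) ≥ ((1-λ)μ(A)^p + λμ(B)^p)^{1/p}` for all nonempty measurable `A, B, C`
with `C ⊇ (1-λ)A ⋆ λB`. -/
def SatisfiesBMbarPos {X : Type*} [MeasurableSpace X] (d : X → X → ℝ) (μ : Measure X)
    (p : ℝ) : Prop :=
  ∀ lam : ℝ, lam ∈ Ioo (0:ℝ) 1 → ∀ A B C : Set X, A.Nonempty → B.Nonempty →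
    MeasurableSet A → MeasurableSet B → MeasurableSet C →
    starComb d lam A B ⊆ C →
    (ENNReal.ofReal (1 - lam) * μ A ^ p + ENNReal.ofReal lam * μ B ^ p) ^ (1/p) ≤ μ C

/-- `(X,d,μ)` satisfies the weighted inequality `BM(p,q)`:
`μ(C)^p ≥ (1-λ)^q μ(A)^p + λ^q μ(B)^p` for all nonempty measurable sets of positive
measure with `C ⊇ (1-λ)A ⋆ λB`. -/
def SatisfiesBMW {X : Type*} [MeasurableSpace X] (d : X → X → ℝ) (μ : Measure X)
    (p q : ℝ) : Prop :=
  ∀ lam : ℝ, lam ∈ Ioo (0:ℝ) 1 → ∀ A B C : Set X, A.Nonempty → B.Nonempty →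
    MeasurableSet A → MeasurableSet B → MeasurableSet C →
    μ A ≠ 0 → μ B ≠ 0 → starComb d lam A B ⊆ C →
    ENNReal.ofReal ((1 - lam) ^ q) * μ A ^ p + ENNReal.ofReal (lam ^ q) * μ B ^ p ≤ μ C ^ p

/-- `(X,d,μ)` satisfies the Prékopa–Leindler inequality `PL`. -/
def SatisfiesPL {X : Type*} [MeasurableSpace X] (d : X → X → ℝ) (μ : Measure X) : Prop :=
  ∀ lam : ℝ, lam ∈ Ioo (0:ℝ) 1 → ∀ f g h : X → ℝ≥0∞,
    Measurable f → Measurable g → Measurable h →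
    (∀ x y z : X, d z x = lam * d x y → d z y = (1 - lam) * d x y →
      f x ^ (1 - lam) * g y ^ lam ≤ h z) →
    (∫⁻ x, f x ∂μ) ^ (1 - lam) * (∫⁻ x, g x ∂μ) ^ lam ≤ ∫⁻ x, h x ∂μ

open Classical in
/-- `(X,d,μ)` satisfies the Borell–Brascamp–Lieb inequality `BBL(p,m)`. -/
def SatisfiesBBL {X : Type*} [MeasurableSpace X] (d : X → X → ℝ) (μ : Measure X)
    (p m : ℝ) : Prop :=
  ∀ lam : ℝ, lam ∈ Ioo (0:ℝ) 1 → ∀ f g h : X → ℝ≥0∞,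
    Measurable f → Measurable g → Measurable h →
    (∀ x y z : X, d z x = lam * d x y → d z y = (1 - lam) * d x y →
      Mp (p : EReal) lam (f x) (g y) ≤ h z) →
    Mp (if m * p + 1 = 0 then (⊥ : EReal) else ((p / (m * p + 1) : ℝ) : EReal)) lam
      (∫⁻ x, f x ∂μ) (∫⁻ x, g x ∂μ) ≤ ∫⁻ x, h x ∂μ

/-- `φ : ℝ → ℝ` is positively decreasing: `t ↦ φ(t)` and `t ↦ φ(-t)` are
non-increasing on `[0,∞)`. -/
def PositivelyDecreasing (φ : ℝ → ℝ) : Prop :=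
  (∀ s t : ℝ, 0 ≤ s → s ≤ t → φ t ≤ φ s) ∧ (∀ s t : ℝ, 0 ≤ s → s ≤ t → φ (-t) ≤ φ (-s))

/-- A set `A ⊆ ℝⁿ` is weakly unconditional. -/
def WeaklyUnconditional {n : ℕ} (A : Set (Fin n → ℝ)) : Prop :=
  ∀ x ∈ A, ∀ ε : Fin n → ℝ, (∀ i, ε i = 0 ∨ ε i = 1) → (fun i => ε i * x i) ∈ A

/-- A nonnegative function on a real vector space is `p`-concave. -/
def PConcaveFn {E : Type*} [AddCommGroup E] [Module ℝ E] (p : EReal) (φ : E → ℝ) : Prop :=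
  ∀ x y : E, ∀ lam : ℝ, lam ∈ Ioo (0:ℝ) 1 →
    MpR p lam (φ x) (φ y) ≤ φ ((1 - lam) • x + lam • y)

/-- A function on a real vector space is radially decreasing. -/
def RadiallyDecreasing {E : Type*} [AddCommGroup E] [Module ℝ E] (φ : E → ℝ) : Prop :=
  ∀ x : E, ∀ t : ℝ, t ∈ Icc (0:ℝ) 1 → φ x ≤ φ (t • x)

/-!
Slice by the translates of `H`. Since `p ≥ -1/(n - 1)`, the Borell–Brascamp–Lieb inequality on the
`(n - 1)`-dimensional space `H` shows that the marginals of `A`, `B` and `(1 - λ)A + λB` satisfy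
`min (a y) (b y') ≤ c ((1 - λ)y + λy')` on the line `Hᗮ`. Hence the superlevel sets of `c` contain
the Minkowski combinations of those of `a` and `b`. As `a` and `b` have the same supremum, these
are nonempty for the same levels, so the one-dimensional Brunn–Minkowski inequality can be
integrated over the levels, and Fubini's theorem concludes.

The same linear inequality on the line yields Borell–Brascamp–Lieb: dividing two functions by their
suprema makes the suprema equal, and Radon's inequality `u²/a + v²/b ≥ (u + v)²/(a + b)`, with
exponent `s + 1` for `2`, restores the power means. Fubini's theorem then raises the dimension.
-/

section PowerMean

variable {lam a b : ℝ} {p q : EReal}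

lemma MpR_top (ha : 0 < a) (hb : 0 < b) : MpR ⊤ lam a b = max a b := by
  simp [MpR, ha.ne', hb.ne']

lemma MpR_bot (ha : 0 < a) (hb : 0 < b) : MpR ⊥ lam a b = min a b := by
  simp [MpR, ha.ne', hb.ne']

lemma MpR_zero (ha : 0 < a) (hb : 0 < b) : MpR 0 lam a b = a ^ (1 - lam) * b ^ lam := by
  simp [MpR, ha.ne', hb.ne']

lemma MpR_coe {r : ℝ} (hr : r ≠ 0) (ha : 0 < a) (hb : 0 < b) :
    MpR r lam a b = ((1 - lam) * a ^ r + lam * b ^ r) ^ (1 / r) := by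
  simp [MpR, ha.ne', hb.ne', hr]

lemma MpR_eq_zero (h : a = 0 ∨ b = 0) : MpR p lam a b = 0 := if_pos h

lemma combination_pos {x y : ℝ} (hlam : lam ∈ Ioo (0 : ℝ) 1) (hx : 0 < x) (hy : 0 < y) :
    0 < (1 - lam) * x + lam * y :=
  add_pos (mul_pos (sub_pos.2 hlam.2) hx) (mul_pos hlam.1 hy)

lemma combination_rpow_pos (hlam : lam ∈ Ioo (0 : ℝ) 1) (ha : 0 < a) (hb : 0 < b) (r : ℝ) :
    0 < (1 - lam) * a ^ r + lam * b ^ r :=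
  combination_pos hlam (Real.rpow_pos_of_pos ha r) (Real.rpow_pos_of_pos hb r)

lemma MpR_neg (hlam : lam ∈ Ioo (0 : ℝ) 1) (ha : 0 < a) (hb : 0 < b) (p : EReal) :
    MpR (-p) lam a b = (MpR p lam a⁻¹ b⁻¹)⁻¹ := by
  have ha' := inv_pos.2 ha
  have hb' := inv_pos.2 hb
  induction p with
  | bot =>
    rw [EReal.neg_bot, MpR_top ha hb, MpR_bot ha' hb']
    rcases le_total a b with hab | hab
    · rw [max_eq_right hab, min_eq_right (inv_anti₀ ha hab), inv_inv]
    · rw [max_eq_left hab, min_eq_left (inv_anti₀ hb hab), inv_inv]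
  | top =>
    rw [EReal.neg_top, MpR_bot ha hb, MpR_top ha' hb']
    rcases le_total a b with hab | hab
    · rw [min_eq_left hab, max_eq_left (inv_anti₀ ha hab), inv_inv]
    · rw [min_eq_right hab, max_eq_right (inv_anti₀ hb hab), inv_inv]
  | coe r =>
    rcases eq_or_ne r 0 with rfl | hr
    · simp only [EReal.coe_zero, neg_zero]
      rw [MpR_zero ha hb, MpR_zero ha' hb', Real.inv_rpow ha.le, Real.inv_rpow hb.le, mul_inv,
        inv_inv, inv_inv]
    · rw [← EReal.coe_neg, MpR_coe (neg_ne_zero.2 hr) ha hb, MpR_coe hr ha' hb',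
        Real.inv_rpow ha.le, Real.inv_rpow hb.le, ← Real.rpow_neg ha.le, ← Real.rpow_neg hb.le,
        ← Real.rpow_neg (combination_rpow_pos hlam ha hb _).le, one_div_neg_eq_neg_one_div]

lemma geom_mean_le_power_mean (hlam : lam ∈ Ioo (0 : ℝ) 1) (ha : 0 < a) (hb : 0 < b) {r : ℝ}
    (hr : 0 < r) : a ^ (1 - lam) * b ^ lam ≤ ((1 - lam) * a ^ r + lam * b ^ r) ^ (1 / r) := by
  have h_amgm := Real.geom_mean_le_arith_mean2_weighted (sub_pos.2 hlam.2).le hlam.1.le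
    (Real.rpow_nonneg ha.le r) (Real.rpow_nonneg hb.le r) (sub_add_cancel 1 lam)
  calc a ^ (1 - lam) * b ^ lam = ((a ^ r) ^ (1 - lam) * (b ^ r) ^ lam) ^ (1 / r) := by
        rw [← Real.rpow_mul ha.le, ← Real.rpow_mul hb.le, mul_comm r, mul_comm r,
          Real.rpow_mul ha.le, Real.rpow_mul hb.le,
          ← Real.mul_rpow (by positivity) (by positivity), one_div,
          Real.rpow_rpow_inv (by positivity) hr.ne']
    _ ≤ ((1 - lam) * a ^ r + lam * b ^ r) ^ (1 / r) := by gcongr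

lemma power_mean_le_power_mean (hlam : lam ∈ Ioo (0 : ℝ) 1) (ha : 0 < a) (hb : 0 < b) {r t : ℝ}
    (hr : 0 < r) (hrt : r ≤ t) :
    ((1 - lam) * a ^ r + lam * b ^ r) ^ (1 / r) ≤ ((1 - lam) * a ^ t + lam * b ^ t) ^ (1 / t) := by
  have ht := hr.trans_le hrt
  have hpos := combination_rpow_pos hlam ha hb r
  have h_jensen :
      ((1 - lam) * a ^ r + lam * b ^ r) ^ (t / r) ≤ (1 - lam) * a ^ t + lam * b ^ t := by
    have := (convexOn_rpow ((one_le_div hr).2 hrt)).2 (Real.rpow_nonneg ha.le r)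
      (Real.rpow_nonneg hb.le r) (sub_pos.2 hlam.2).le hlam.1.le (sub_add_cancel 1 lam)
    simpa only [smul_eq_mul, ← Real.rpow_mul ha.le, ← Real.rpow_mul hb.le,
      mul_div_cancel₀ t hr.ne'] using this
  calc ((1 - lam) * a ^ r + lam * b ^ r) ^ (1 / r)
      = (((1 - lam) * a ^ r + lam * b ^ r) ^ (t / r)) ^ (1 / t) := by
        rw [← Real.rpow_mul hpos.le]
        congr 1
        field_simp
    _ ≤ ((1 - lam) * a ^ t + lam * b ^ t) ^ (1 / t) := by gcongr

lemma power_mean_le_max (hlam : lam ∈ Ioo (0 : ℝ) 1) (ha : 0 < a) (hb : 0 < b) {r : ℝ}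
    (hr : 0 < r) : ((1 - lam) * a ^ r + lam * b ^ r) ^ (1 / r) ≤ max a b := by
  have hmax : 0 < max a b := lt_max_of_lt_left ha
  have hlam' := sub_pos.2 hlam.2
  have hlam₀ := hlam.1
  calc ((1 - lam) * a ^ r + lam * b ^ r) ^ (1 / r)
      ≤ ((1 - lam) * max a b ^ r + lam * max a b ^ r) ^ (1 / r) := by
        gcongr
        exacts [le_max_left a b, le_max_right a b]
    _ = max a b := by
        rw [← add_mul, sub_add_cancel, one_mul, one_div, Real.rpow_rpow_inv hmax.le hr.ne']

lemma MpR_le_MpR_of_nonneg (hlam : lam ∈ Ioo (0 : ℝ) 1) (ha : 0 < a) (hb : 0 < b) (hp : 0 ≤ p)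
    (hpq : p ≤ q) : MpR p lam a b ≤ MpR q lam a b := by
  induction p with
  | bot => simp at hp
  | top => rw [top_le_iff.1 hpq]
  | coe r =>
  have hr : 0 ≤ r := EReal.coe_nonneg.1 hp
  induction q with
  | bot => simp at hpq
  | top =>
    rw [MpR_top ha hb]
    rcases hr.eq_or_lt with rfl | hr
    · rw [EReal.coe_zero, MpR_zero ha hb]
      exact (geom_mean_le_power_mean hlam ha hb one_pos).trans
        (power_mean_le_max hlam ha hb one_pos)
    · rw [MpR_coe hr.ne' ha hb]
      exact power_mean_le_max hlam ha hb hr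
  | coe t =>
    have hrt : r ≤ t := EReal.coe_le_coe_iff.1 hpq
    rcases hrt.eq_or_lt with rfl | hrt'
    · rfl
    rw [MpR_coe (hr.trans_lt hrt').ne' ha hb]
    rcases hr.eq_or_lt with rfl | hr
    · rw [EReal.coe_zero, MpR_zero ha hb]
      exact geom_mean_le_power_mean hlam ha hb hrt'
    · rw [MpR_coe hr.ne' ha hb]
      exact power_mean_le_power_mean hlam ha hb hr hrt

lemma MpR_pos (hlam : lam ∈ Ioo (0 : ℝ) 1) (ha : 0 < a) (hb : 0 < b) : 0 < MpR p lam a b := by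
  induction p with
  | bot => rw [MpR_bot ha hb]; exact lt_min ha hb
  | top => rw [MpR_top ha hb]; exact lt_max_of_lt_left ha
  | coe r =>
    rcases eq_or_ne r 0 with rfl | hr
    · rw [EReal.coe_zero, MpR_zero ha hb]; positivity
    · rw [MpR_coe hr ha hb]; exact Real.rpow_pos_of_pos (combination_rpow_pos hlam ha hb r) _

lemma MpR_le_MpR_of_nonpos (hlam : lam ∈ Ioo (0 : ℝ) 1) (ha : 0 < a) (hb : 0 < b) (hq : q ≤ 0)
    (hpq : p ≤ q) : MpR p lam a b ≤ MpR q lam a b := by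
  rw [← neg_neg p, ← neg_neg q, MpR_neg hlam ha hb, MpR_neg hlam ha hb]
  exact inv_anti₀ (MpR_pos hlam (inv_pos.2 ha) (inv_pos.2 hb)) <|
    MpR_le_MpR_of_nonneg hlam (inv_pos.2 ha) (inv_pos.2 hb) (EReal.neg_nonneg.2 hq)
      (EReal.neg_le_neg_iff.2 hpq)

lemma MpR_mono_exponent (hlam : lam ∈ Ioo (0 : ℝ) 1) (ha : 0 ≤ a) (hb : 0 ≤ b) (hpq : p ≤ q) :
    MpR p lam a b ≤ MpR q lam a b := by
  rcases ha.eq_or_lt with rfl | ha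
  · simp only [MpR_eq_zero (Or.inl rfl), le_refl]
  rcases hb.eq_or_lt with rfl | hb
  · simp only [MpR_eq_zero (Or.inr rfl), le_refl]
  rcases le_total 0 p with hp | hp
  · exact MpR_le_MpR_of_nonneg hlam ha hb hp hpq
  rcases le_total q 0 with hq | hq
  · exact MpR_le_MpR_of_nonpos hlam ha hb hq hpq
  · exact (MpR_le_MpR_of_nonpos hlam ha hb le_rfl hp).trans
      (MpR_le_MpR_of_nonneg hlam ha hb le_rfl hq)

lemma PConcaveFn.mono_exponent {E : Type*} [AddCommGroup E] [Module ℝ E] {φ : E → ℝ}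
    (hφ : PConcaveFn q φ) (hφ₀ : ∀ x, 0 ≤ φ x) (hpq : p ≤ q) : PConcaveFn p φ :=
  fun x y _ hlam => (MpR_mono_exponent hlam (hφ₀ x) (hφ₀ y) hpq).trans (hφ x y _ hlam)

end PowerMean

/-- The exponent `-1/s`, read as `-∞` at `s = 0`. In this parametrisation, integrating over a space
of dimension `d` turns the exponent `-1/(s + d)` into `-1/s`. -/
def negInv (s : ℝ≥0) : EReal := -(((s : ℝ≥0∞)⁻¹ : ℝ≥0∞) : EReal)

lemma negInv_zero : negInv 0 = ⊥ := by simp [negInv]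

lemma negInv_of_ne_zero {s : ℝ≥0} (hs : s ≠ 0) : negInv s = ((-(s : ℝ)⁻¹ : ℝ) : EReal) := by
  rw [negInv, ← ENNReal.coe_inv hs, EReal.coe_neg, ← NNReal.coe_inv]
  rfl

lemma negInv_monotone : Monotone negInv := fun _ _ hst =>
  EReal.neg_le_neg_iff.2 <| EReal.coe_ennreal_le_coe_ennreal_iff.2 <|
    ENNReal.inv_le_inv.2 <| ENNReal.coe_le_coe.2 hst

section NegativePowerMean

variable {lam a b : ℝ} {s : ℝ≥0}

lemma MpR_negInv (hs : s ≠ 0) (ha : 0 < a) (hb : 0 < b) :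
    MpR (negInv s) lam a b =
      ((1 - lam) * a ^ (-(s : ℝ)⁻¹) + lam * b ^ (-(s : ℝ)⁻¹)) ^ (-(s : ℝ)) := by
  rw [negInv_of_ne_zero hs, MpR_coe (by simpa using hs) ha hb, one_div, inv_neg, inv_inv]

lemma radon_inequality (hlam : lam ∈ Ioo (0 : ℝ) 1) {u v x y r : ℝ} (hu : 0 < u) (hv : 0 < v)
    (hx : 0 < x) (hy : 0 < y) (hr : 0 ≤ r) :
    ((1 - lam) * x + lam * y) ^ (r + 1) ≤ ((1 - lam) * u + lam * v) ^ r *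
      ((1 - lam) * (x ^ (r + 1) / u ^ r) + lam * (y ^ (r + 1) / v ^ r)) := by
  obtain ⟨hlam₀, hlam₁⟩ : 0 < lam ∧ 0 < 1 - lam := ⟨hlam.1, sub_pos.2 hlam.2⟩
  set U := (1 - lam) * u + lam * v with hU
  have hUpos : 0 < U := by positivity
  have h_jensen := (convexOn_rpow (le_add_of_nonneg_left hr)).2 (div_pos hx hu).le
    (div_pos hy hv).le (by positivity : 0 ≤ (1 - lam) * u / U) (by positivity : 0 ≤ lam * v / U)
    (by rw [← add_div, ← hU, div_self hUpos.ne'])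
  have h_mean : (1 - lam) * u / U * (x / u) + lam * v / U * (y / v) =
      ((1 - lam) * x + lam * y) / U := by field_simp
  simp only [smul_eq_mul] at h_jensen
  rw [h_mean, Real.div_rpow (by positivity) hUpos.le, div_le_iff₀ (by positivity)] at h_jensen
  refine h_jensen.trans_eq ?_
  rw [Real.div_rpow hx.le hu.le, Real.div_rpow hy.le hv.le]
  simp only [Real.rpow_add_one hUpos.ne', Real.rpow_add_one hu.ne', Real.rpow_add_one hv.ne']
  field_simp

lemma MpR_negInv_le_mul_combination (hlam : lam ∈ Ioo (0 : ℝ) 1) {c d : ℝ} (ha : 0 < a)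
    (hb : 0 < b) (hc : 0 < c) (hd : 0 < d) :
    MpR (negInv s) lam a b ≤
      MpR (negInv (s + 1)) lam c d * ((1 - lam) * (a / c) + lam * (b / d)) := by
  obtain ⟨hlam₀, hlam₁⟩ : 0 < lam ∧ 0 < 1 - lam := ⟨hlam.1, sub_pos.2 hlam.2⟩
  rw [MpR_negInv (by simp) hc hd]
  have hcd := combination_rpow_pos hlam hc hd (-((s + 1 : ℝ≥0) : ℝ)⁻¹)
  rw [Real.rpow_neg hcd.le, inv_mul_eq_div, le_div_iff₀ (Real.rpow_pos_of_pos hcd _)]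
  rcases eq_or_ne s 0 with rfl | hs
  · rw [negInv_zero, MpR_bot ha hb]
    simp only [zero_add, NNReal.coe_one, inv_one, Real.rpow_neg_one, Real.rpow_one]
    calc min a b * ((1 - lam) * c⁻¹ + lam * d⁻¹)
        = (1 - lam) * (min a b / c) + lam * (min a b / d) := by ring
      _ ≤ (1 - lam) * (a / c) + lam * (b / d) := by
        gcongr
        exacts [min_le_left a b, min_le_right a b]
  · rw [MpR_negInv hs ha hb]
    have hab := combination_rpow_pos hlam ha hb (-(s : ℝ)⁻¹)
    rw [Real.rpow_neg hab.le, inv_mul_eq_div, div_le_iff₀' (Real.rpow_pos_of_pos hab _)]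
    have h_cancel {x r : ℝ} (hx : 0 < x) (hr : r ≠ 0) : (x ^ (-r⁻¹)) ^ r = x⁻¹ := by
      rw [Real.rpow_neg hx.le, Real.inv_rpow (by positivity), Real.rpow_inv_rpow hx.le hr]
    have hs' : (s : ℝ) ≠ 0 := by exact_mod_cast hs
    have hs₁ : (s : ℝ) + 1 ≠ 0 := by positivity
    have h_radon := radon_inequality hlam (Real.rpow_pos_of_pos ha (-(s : ℝ)⁻¹))
      (Real.rpow_pos_of_pos hb (-(s : ℝ)⁻¹)) (Real.rpow_pos_of_pos hc (-((s : ℝ) + 1)⁻¹))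
      (Real.rpow_pos_of_pos hd (-((s : ℝ) + 1)⁻¹)) s.2
    rw [NNReal.coe_add, NNReal.coe_one]
    simpa only [NNReal.val_eq_coe, h_cancel ha hs', h_cancel hb hs', h_cancel hc hs₁,
      h_cancel hd hs₁, inv_div_inv] using h_radon

end NegativePowerMean

section ENNRealPowerMean

variable {lam : ℝ} {p : EReal} {a b c d : ℝ≥0∞} {s : ℝ≥0}

lemma Mp_eq_zero (h : a = 0 ∨ b = 0) : Mp p lam a b = 0 := if_pos h

lemma Mp_top (ha : a ≠ 0) (hb : b ≠ 0) : Mp ⊤ lam a b = max a b := by simp [Mp, ha, hb]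

lemma Mp_bot : Mp ⊥ lam a b = min a b := by
  by_cases h : a = 0 ∨ b = 0
  · rw [Mp_eq_zero h]
    rcases h with rfl | rfl <;> simp
  · simp [Mp, h]

lemma Mp_zero (ha : a ≠ 0) (hb : b ≠ 0) : Mp 0 lam a b = a ^ (1 - lam) * b ^ lam := by
  simp [Mp, ha, hb]

lemma Mp_coe {r : ℝ} (hr : r ≠ 0) (ha : a ≠ 0) (hb : b ≠ 0) : Mp r lam a b =
    (ENNReal.ofReal (1 - lam) * a ^ r + ENNReal.ofReal lam * b ^ r) ^ (1 / r) := by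
  simp [Mp, ha, hb, hr]

lemma Mp_ofReal (hlam : lam ∈ Ioo (0 : ℝ) 1) {x y : ℝ} (hx : 0 ≤ x) (hy : 0 ≤ y) :
    Mp p lam (ENNReal.ofReal x) (ENNReal.ofReal y) = ENNReal.ofReal (MpR p lam x y) := by
  rcases hx.eq_or_lt with rfl | hx
  · simp [Mp_eq_zero, MpR_eq_zero]
  rcases hy.eq_or_lt with rfl | hy
  · simp [Mp_eq_zero, MpR_eq_zero]
  have hx' := (ENNReal.ofReal_pos.2 hx).ne'
  have hy' := (ENNReal.ofReal_pos.2 hy).ne'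
  induction p with
  | bot => rw [Mp_bot, MpR_bot hx hy, ENNReal.ofReal_min]
  | top => rw [Mp_top hx' hy', MpR_top hx hy, ENNReal.ofReal_max]
  | coe r =>
    rcases eq_or_ne r 0 with rfl | hr
    · rw [EReal.coe_zero, Mp_zero hx' hy', MpR_zero hx hy, ENNReal.ofReal_rpow_of_pos hx,
        ENNReal.ofReal_rpow_of_pos hy, ENNReal.ofReal_mul (by positivity)]
    · have hlam₁ : 0 < 1 - lam := sub_pos.2 hlam.2
      have hlam₀ := hlam.1
      rw [Mp_coe hr hx' hy', MpR_coe hr hx hy, ENNReal.ofReal_rpow_of_pos hx,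
        ENNReal.ofReal_rpow_of_pos hy, ← ENNReal.ofReal_mul hlam₁.le, ← ENNReal.ofReal_mul hlam₀.le,
        ← ENNReal.ofReal_add (by positivity) (by positivity),
        ENNReal.ofReal_rpow_of_pos (combination_rpow_pos hlam hx hy r)]

lemma Mp_mono (hlam : lam ∈ Ioo (0 : ℝ) 1) (hac : a ≤ c) (hbd : b ≤ d) :
    Mp p lam a b ≤ Mp p lam c d := by
  by_cases h : a = 0 ∨ b = 0
  · rw [Mp_eq_zero h]
    exact zero_le
  obtain ⟨ha, hb⟩ := not_or.1 h
  have hc : c ≠ 0 := ne_bot_of_le_ne_bot ha hac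
  have hd : d ≠ 0 := ne_bot_of_le_ne_bot hb hbd
  have hlam₁ := (sub_pos.2 hlam.2).le
  have hlam₀ := hlam.1.le
  induction p with
  | bot => simpa only [Mp_bot] using min_le_min hac hbd
  | top => simpa only [Mp_top ha hb, Mp_top hc hd] using max_le_max hac hbd
  | coe r =>
    rcases lt_trichotomy r 0 with hr | rfl | hr
    · rw [Mp_coe hr.ne ha hb, Mp_coe hr.ne hc hd, ← neg_neg r]
      simp only [one_div, inv_neg (a := -r), ENNReal.rpow_neg _ (-r), ENNReal.rpow_neg _ (-r)⁻¹]
      have := neg_pos.2 hr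
      gcongr
    · rw [EReal.coe_zero, Mp_zero ha hb, Mp_zero hc hd]
      gcongr
    · rw [Mp_coe hr.ne' ha hb, Mp_coe hr.ne' hc hd]
      gcongr

lemma Mp_const_mul (hc : c ≠ 0) (hc' : c ≠ ∞) : Mp p lam (c * a) (c * b) = c * Mp p lam a b := by
  by_cases h : a = 0 ∨ b = 0
  · rw [Mp_eq_zero h, Mp_eq_zero (by simpa [hc] using h), mul_zero]
  obtain ⟨ha, hb⟩ := not_or.1 h
  have hca := mul_ne_zero hc ha
  have hcb := mul_ne_zero hc hb
  induction p with
  | bot => rw [Mp_bot, Mp_bot, min_mul_mul_left]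
  | top => rw [Mp_top ha hb, Mp_top hca hcb, max_mul_mul_left]
  | coe r =>
    rcases eq_or_ne r 0 with rfl | hr
    · rw [EReal.coe_zero, Mp_zero ha hb, Mp_zero hca hcb, ENNReal.mul_rpow_of_ne_zero hc ha,
        ENNReal.mul_rpow_of_ne_zero hc hb, mul_mul_mul_comm, ← ENNReal.rpow_add _ _ hc hc',
        sub_add_cancel, ENNReal.rpow_one]
    · have hcr : c ^ r ≠ 0 := by simp [ENNReal.rpow_eq_zero_iff, hc, hc']
      have hcr' : c ^ r ≠ ∞ := by simp [ENNReal.rpow_eq_top_iff, hc, hc']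
      rw [Mp_coe hr ha hb, Mp_coe hr hca hcb, ENNReal.mul_rpow_of_ne_zero hc ha,
        ENNReal.mul_rpow_of_ne_zero hc hb, mul_left_comm, mul_left_comm (ENNReal.ofReal lam),
        ← mul_add, ENNReal.mul_rpow_eq_ite, if_neg (by simp [hcr, hcr']), one_div,
        ENNReal.rpow_rpow_inv hr]

lemma Mp_pos_lt_top (hlam : lam ∈ Ioo (0 : ℝ) 1) (ha : a ≠ 0) (ha' : a ≠ ∞) (hb : b ≠ 0)
    (hb' : b ≠ ∞) : 0 < Mp p lam a b ∧ Mp p lam a b < ∞ := by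
  rw [← ENNReal.ofReal_toReal ha', ← ENNReal.ofReal_toReal hb',
    Mp_ofReal hlam ENNReal.toReal_nonneg ENNReal.toReal_nonneg]
  have h_pos := MpR_pos (p := p) hlam (ENNReal.toReal_pos ha ha') (ENNReal.toReal_pos hb hb')
  exact ⟨ENNReal.ofReal_pos.2 h_pos, ENNReal.ofReal_lt_top⟩

lemma min_div_mul_Mp_le (hlam : lam ∈ Ioo (0 : ℝ) 1) (hc : c ≠ 0) (hc' : c ≠ ∞) (hd : d ≠ 0)
    (hd' : d ≠ ∞) (ha : a ≠ ∞) : min (a / c) (b / d) * Mp p lam c d ≤ Mp p lam a b := by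
  rcases eq_or_ne (min (a / c) (b / d)) 0 with h | h
  · simp [h]
  have h' : min (a / c) (b / d) ≠ ∞ :=
    ne_top_of_le_ne_top (ENNReal.div_ne_top ha hc) (min_le_left _ _)
  rw [← Mp_const_mul h h']
  exact Mp_mono hlam
    ((ENNReal.le_div_iff_mul_le (.inl hc) (.inl hc')).1 (min_le_left _ _))
    ((ENNReal.le_div_iff_mul_le (.inl hd) (.inl hd')).1 (min_le_right _ _))

lemma Mp_negInv (hlam : lam ∈ Ioo (0 : ℝ) 1) (hs : s ≠ 0) : Mp (negInv s) lam a b =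
    (ENNReal.ofReal (1 - lam) * a ^ (-(s : ℝ)⁻¹) + ENNReal.ofReal lam * b ^ (-(s : ℝ)⁻¹)) ^
      (-(s : ℝ)) := by
  have hs' : 0 < (s : ℝ) := by positivity
  by_cases h : a = 0 ∨ b = 0
  · rw [Mp_eq_zero h]
    rcases h with rfl | rfl <;> simp [hs', hlam.1, hlam.2]
  · obtain ⟨ha, hb⟩ := not_or.1 h
    rw [negInv_of_ne_zero hs, Mp_coe (by simpa using hs) ha hb, one_div, inv_neg, inv_inv]

lemma continuous_Mp_negInv (hlam : lam ∈ Ioo (0 : ℝ) 1) :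
    Continuous fun x : ℝ≥0∞ × ℝ≥0∞ => Mp (negInv s) lam x.1 x.2 := by
  rcases eq_or_ne s 0 with rfl | hs
  · simpa only [negInv_zero, Mp_bot] using continuous_fst.min continuous_snd
  · simp only [Mp_negInv hlam hs]
    have h_rpow {r : ℝ} : Continuous fun x : ℝ≥0∞ => x ^ r := ENNReal.continuous_rpow_const
    exact h_rpow.comp <|
      ((ENNReal.continuous_const_mul ENNReal.ofReal_ne_top).comp (h_rpow.comp continuous_fst)).add
        ((ENNReal.continuous_const_mul ENNReal.ofReal_ne_top).comp (h_rpow.comp continuous_snd))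

lemma Mp_negInv_le_mul_combination (hlam : lam ∈ Ioo (0 : ℝ) 1) (hc : c ≠ 0) (hc' : c ≠ ∞)
    (hd : d ≠ 0) (hd' : d ≠ ∞) : Mp (negInv s) lam a b ≤ Mp (negInv (s + 1)) lam c d *
      (ENNReal.ofReal (1 - lam) * (a / c) + ENNReal.ofReal lam * (b / d)) := by
  obtain ⟨hlam₀, hlam₁⟩ : 0 < lam ∧ 0 < 1 - lam := ⟨hlam.1, sub_pos.2 hlam.2⟩
  by_cases h₀ : a = 0 ∨ b = 0
  · rw [Mp_eq_zero h₀]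
    exact zero_le
  by_cases h_top : a = ∞ ∨ b = ∞
  · have h_ne_zero := (Mp_pos_lt_top (p := negInv (s + 1)) hlam hc hc' hd hd').1.ne'
    suffices ENNReal.ofReal (1 - lam) * (a / c) + ENNReal.ofReal lam * (b / d) = ∞ by
      rw [this, ENNReal.mul_top h_ne_zero]
      exact le_top
    rcases h_top with rfl | rfl <;>
      simp [ENNReal.top_div_of_ne_top, ENNReal.mul_top, hc', hd', hlam₀, hlam.2]
  obtain ⟨ha, hb⟩ := not_or.1 h₀
  obtain ⟨ha', hb'⟩ := not_or.1 h_top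
  lift a to ℝ≥0 using ha'
  lift b to ℝ≥0 using hb'
  lift c to ℝ≥0 using hc'
  lift d to ℝ≥0 using hd'
  simp only [ne_eq, ENNReal.coe_eq_zero, ← pos_iff_ne_zero, ← NNReal.coe_pos] at ha hb hc hd
  simp only [← ENNReal.ofReal_coe_nnreal]
  rw [Mp_ofReal hlam a.coe_nonneg b.coe_nonneg, Mp_ofReal hlam c.coe_nonneg d.coe_nonneg,
    ← ENNReal.ofReal_div_of_pos hc, ← ENNReal.ofReal_div_of_pos hd,
    ← ENNReal.ofReal_mul hlam₁.le, ← ENNReal.ofReal_mul hlam₀.le,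
    ← ENNReal.ofReal_add (by positivity) (by positivity),
    ← ENNReal.ofReal_mul (MpR_pos hlam hc hd).le]
  exact ENNReal.ofReal_le_ofReal (MpR_negInv_le_mul_combination hlam ha hb hc hd)

end ENNRealPowerMean

section OneDimensional

lemma volume_add_volume_le_of_isGreatest_of_isLeast {X Y : Set ℝ} {x y : ℝ} (hx : IsGreatest X x)
    (hy : IsLeast Y y) (hY : MeasurableSet Y) : volume X + volume Y ≤ volume (X + Y) := by
  -- The translates `y + X` and `x + Y` lie in `X + Y` and meet in the single point `x + y`.
  have h_disjoint : AEDisjoint volume (y +ᵥ X) (x +ᵥ Y) := by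
    refine measure_mono_null (t := {x + y}) ?_ (measure_singleton _)
    rintro _ ⟨⟨x', hx', rfl⟩, y', hy', h_eq⟩
    simp only [vadd_eq_add] at h_eq
    have := hx.2 hx'
    have := hy.2 hy'
    simp only [vadd_eq_add, mem_singleton_iff]
    linarith
  calc volume X + volume Y = volume ((y +ᵥ X) ∪ (x +ᵥ Y)) := by
        rw [measure_union₀ (hY.const_vadd x).nullMeasurableSet h_disjoint, measure_vadd,
          measure_vadd]
    _ ≤ volume (X + Y) := by
        refine measure_mono (union_subset ?_ ?_)
        · rintro _ ⟨x', hx', rfl⟩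
          exact ⟨x', hx', y, hy.1, add_comm x' y⟩
        · rintro _ ⟨y', hy', rfl⟩
          exact ⟨x, hx.1, y', hy', rfl⟩

lemma volume_add_volume_le_volume_add {X Y : Set ℝ} (hX : MeasurableSet X) (hY : MeasurableSet Y)
    (hX₀ : X.Nonempty) (hY₀ : Y.Nonempty) : volume X + volume Y ≤ volume (X + Y) := by
  obtain ⟨x, hx⟩ := hX₀
  obtain ⟨y, hy⟩ := hY₀
  rw [hX.measure_eq_iSup_isCompact, hY.measure_eq_iSup_isCompact]
  simp only [iSup_and']
  refine ENNReal.biSup_add_biSup_le' ⟨∅, empty_subset _, isCompact_empty⟩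
    ⟨∅, empty_subset _, isCompact_empty⟩ fun K ⟨hKX, hK⟩ L ⟨hLY, hL⟩ => ?_
  obtain ⟨k, hk⟩ := (hK.insert x).exists_isGreatest (insert_nonempty x K)
  obtain ⟨l, hl⟩ := (hL.insert y).exists_isLeast (insert_nonempty y L)
  calc volume K + volume L ≤ volume (insert x K) + volume (insert y L) := by
        gcongr <;> exact subset_insert _ _
    _ ≤ volume (insert x K + insert y L) :=
        volume_add_volume_le_of_isGreatest_of_isLeast hk hl (hL.insert y).measurableSet
    _ ≤ volume (X + Y) := by
        gcongr <;> exact insert_subset ‹_› ‹_›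

lemma combination_volume_le {lam : ℝ} (hlam : lam ∈ Ioo (0 : ℝ) 1) {X Y : Set ℝ}
    (hX : MeasurableSet X) (hY : MeasurableSet Y) (hX₀ : X.Nonempty) (hY₀ : Y.Nonempty) :
    ENNReal.ofReal (1 - lam) * volume X + ENNReal.ofReal lam * volume Y ≤
      volume ((1 - lam) • X + lam • Y) := by
  have h_scale {r : ℝ} (hr : 0 < r) (Z : Set ℝ) :
      ENNReal.ofReal r * volume Z = volume (r • Z) := by
    rw [Measure.addHaar_smul, Module.finrank_self, pow_one, abs_of_pos hr]
  have hlam₁ : 0 < 1 - lam := sub_pos.2 hlam.2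
  rw [h_scale hlam₁, h_scale hlam.1]
  exact volume_add_volume_le_volume_add (hX.const_smul₀ _) (hY.const_smul₀ _) hX₀.smul_set
    hY₀.smul_set

lemma volume_setOf_pos_and_ofReal_lt (a : ℝ≥0∞) :
    volume {t : ℝ | 0 < t ∧ ENNReal.ofReal t < a} = a := by
  induction a with
  | top =>
    simp only [ENNReal.ofReal_lt_top, and_true]
    exact Real.volume_Ioi
  | coe a =>
    have : {t : ℝ | 0 < t ∧ ENNReal.ofReal t < a} = Ioo 0 (a : ℝ) := by
      ext t
      exact and_congr_right fun ht => by simp [ENNReal.ofReal, Real.toNNReal_lt_iff_lt_coe ht.le]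
    simp [this]

lemma lintegral_eq_lintegral_measure_ofReal_lt {α : Type*} [MeasurableSpace α] (ν : Measure α)
    [SFinite ν] {f : α → ℝ≥0∞} (hf : Measurable f) :
    ∫⁻ x, f x ∂ν = ∫⁻ t in Ioi (0 : ℝ), ν {x | ENNReal.ofReal t < f x} := by
  set S : Set (α × ℝ) := {q | 0 < q.2 ∧ ENNReal.ofReal q.2 < f q.1}
  have hS : MeasurableSet S := (measurableSet_lt measurable_const measurable_snd).inter
    (measurableSet_lt measurable_snd.ennreal_ofReal (hf.comp measurable_fst))
  calc ∫⁻ x, f x ∂ν = ∫⁻ x, volume (Prod.mk x ⁻¹' S) ∂ν :=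
        lintegral_congr fun x => (volume_setOf_pos_and_ofReal_lt (f x)).symm
    _ = ∫⁻ t, ν ((fun x => (x, t)) ⁻¹' S) := by
        rw [← Measure.prod_apply hS, Measure.prod_apply_symm hS]
    _ = ∫⁻ t in Ioi (0 : ℝ), ν {x | ENNReal.ofReal t < f x} := by
        rw [← lintegral_indicator measurableSet_Ioi]
        refine lintegral_congr fun t => ?_
        by_cases ht : 0 < t <;> simp [S, ht]

variable {lam : ℝ}

lemma combination_lintegral_le_lintegral_real (hlam : lam ∈ Ioo (0 : ℝ) 1) {f g h : ℝ → ℝ≥0∞}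
    (hf : Measurable f) (hg : Measurable g) (hh : Measurable h) (h_sup : ⨆ x, f x = ⨆ x, g x)
    (h_min : ∀ x y, min (f x) (g y) ≤ h ((1 - lam) • x + lam • y)) :
    ENNReal.ofReal (1 - lam) * (∫⁻ x, f x) + ENNReal.ofReal lam * (∫⁻ x, g x) ≤ ∫⁻ x, h x := by
  rw [lintegral_eq_lintegral_measure_ofReal_lt _ hf, lintegral_eq_lintegral_measure_ofReal_lt _ hg,
    lintegral_eq_lintegral_measure_ofReal_lt _ hh,
    ← lintegral_const_mul' _ _ ENNReal.ofReal_ne_top,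
    ← lintegral_const_mul' _ _ ENNReal.ofReal_ne_top]
  refine (le_lintegral_add _ _).trans (lintegral_mono fun t => ?_)
  -- Equality of the suprema makes the two superlevel sets empty simultaneously.
  by_cases ht : ENNReal.ofReal t < ⨆ x, f x
  · refine (combination_volume_le hlam (measurableSet_lt measurable_const hf)
      (measurableSet_lt measurable_const hg) (lt_iSup_iff.1 ht)
      (lt_iSup_iff.1 (h_sup ▸ ht : _ < ⨆ x, g x))).trans (measure_mono ?_)
    rintro _ ⟨_, ⟨x, hx, rfl⟩, _, ⟨y, hy, rfl⟩, rfl⟩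
    exact (lt_min hx hy).trans_le (h_min x y)
  · have h_empty {u : ℝ → ℝ≥0∞} (hu : ⨆ x, f x = ⨆ x, u x) :
        {x | ENNReal.ofReal t < u x} = ∅ :=
      eq_empty_of_forall_notMem fun x hx => ht (hu ▸ hx.trans_le (le_iSup u x))
    simp [h_empty rfl, h_empty h_sup]

end OneDimensional

section HaarTransfer

variable {V W : Type*} [NormedAddCommGroup V] [NormedSpace ℝ V] [FiniteDimensional ℝ V]
  [MeasurableSpace V] [BorelSpace V] [NormedAddCommGroup W] [NormedSpace ℝ W]
  [MeasurableSpace W] [BorelSpace W]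

lemma exists_lintegral_eq_mul_lintegral_comp (L : W ≃L[ℝ] V) (κ : Measure W) [κ.IsAddHaarMeasure]
    (ν : Measure V) [ν.IsAddHaarMeasure] :
    ∃ c : ℝ≥0, ∀ f : V → ℝ≥0∞, Measurable f → ∫⁻ x, f x ∂ν = c * ∫⁻ w, f (L w) ∂κ := by
  have := L.isAddHaarMeasure_map κ
  refine ⟨ν.addHaarScalarFactor (κ.map L), fun f hf => ?_⟩
  rw [← lintegral_map hf L.continuous.measurable]
  conv_lhs => rw [Measure.isAddLeftInvariant_eq_smul ν (κ.map L)]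
  exact lintegral_smul_measure (R := ℝ≥0) _ _

lemma combination_lintegral_le_lintegral_of_finrank_eq_one {lam : ℝ} (hlam : lam ∈ Ioo (0 : ℝ) 1)
    (hV : Module.finrank ℝ V = 1) (ν : Measure V) [ν.IsAddHaarMeasure] {f g h : V → ℝ≥0∞}
    (hf : Measurable f) (hg : Measurable g) (hh : Measurable h) (h_sup : ⨆ x, f x = ⨆ x, g x)
    (h_min : ∀ x y, min (f x) (g y) ≤ h ((1 - lam) • x + lam • y)) :
    ENNReal.ofReal (1 - lam) * ∫⁻ x, f x ∂ν + ENNReal.ofReal lam * ∫⁻ x, g x ∂ν ≤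
      ∫⁻ x, h x ∂ν := by
  let L : ℝ ≃L[ℝ] V := ContinuousLinearEquiv.ofFinrankEq (by rw [hV, Module.finrank_self])
  have hL : Measurable L := L.continuous.measurable
  obtain ⟨c, hc⟩ := exists_lintegral_eq_mul_lintegral_comp L volume ν
  rw [hc f hf, hc g hg, hc h hh, mul_left_comm, mul_left_comm (ENNReal.ofReal lam), ← mul_add]
  gcongr
  refine combination_lintegral_le_lintegral_real hlam (hf.comp hL) (hg.comp hL) (hh.comp hL) ?_
    fun x y => ?_
  · rw [L.surjective.iSup_comp (g := f), L.surjective.iSup_comp (g := g), h_sup]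
  · simpa only [map_add, map_smul] using h_min (L x) (L y)

end HaarTransfer

section BorellBrascampLieb

variable {lam : ℝ}

/-- The Borell–Brascamp–Lieb inequality for a measure `ν` of dimension `d`, over all exponents
`-1/(s + d)` with `s ≥ 0` at once, i.e. over `[-1/d, 0)`. -/
def BorellBrascampLieb {V : Type*} [AddCommGroup V] [Module ℝ V] [MeasurableSpace V] (lam : ℝ)
    (ν : Measure V) (d : ℝ≥0) : Prop :=
  ∀ (s : ℝ≥0) ⦃f g h : V → ℝ≥0∞⦄, Measurable f → Measurable g → Measurable h →
    (∀ x y, Mp (negInv (s + d)) lam (f x) (g y) ≤ h ((1 - lam) • x + lam • y)) →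
    Mp (negInv s) lam (∫⁻ x, f x ∂ν) (∫⁻ x, g x ∂ν) ≤ ∫⁻ x, h x ∂ν

lemma iSup_ne_zero_of_lintegral_ne_zero {α : Type*} [MeasurableSpace α] {ν : Measure α}
    {f : α → ℝ≥0∞} (hf : ∫⁻ x, f x ∂ν ≠ 0) : ⨆ x, f x ≠ 0 := by
  contrapose! hf
  simp only [ENNReal.iSup_eq_zero.1 hf, lintegral_zero]

lemma Mp_lintegral_le_lintegral_of_iSup_ne_top (hlam : lam ∈ Ioo (0 : ℝ) 1) {s : ℝ≥0}
    {f g h : ℝ → ℝ≥0∞} (hf : Measurable f) (hg : Measurable g) (hh : Measurable h)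
    (hf_bdd : ⨆ x, f x ≠ ∞) (hg_bdd : ⨆ x, g x ≠ ∞)
    (h_mean : ∀ x y, Mp (negInv (s + 1)) lam (f x) (g y) ≤ h ((1 - lam) • x + lam • y)) :
    Mp (negInv s) lam (∫⁻ x, f x) (∫⁻ x, g x) ≤ ∫⁻ x, h x := by
  by_cases h₀ : ∫⁻ x, f x = 0 ∨ ∫⁻ x, g x = 0
  · rw [Mp_eq_zero h₀]
    exact zero_le
  obtain ⟨hf₀, hg₀⟩ := not_or.1 h₀
  -- Dividing by the suprema reduces to the linear inequality for `f / a`, `g / b`, `h / c`.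
  set a := ⨆ x, f x
  set b := ⨆ x, g x
  set c := Mp (negInv (s + 1)) lam a b
  have ha : a ≠ 0 := iSup_ne_zero_of_lintegral_ne_zero hf₀
  have hb : b ≠ 0 := iSup_ne_zero_of_lintegral_ne_zero hg₀
  obtain ⟨hc_pos, hc_top⟩ : 0 < c ∧ c < ∞ := Mp_pos_lt_top hlam ha hf_bdd hb hg_bdd
  have h_linear : ENNReal.ofReal (1 - lam) * ((∫⁻ x, f x) / a) +
      ENNReal.ofReal lam * ((∫⁻ x, g x) / b) ≤ (∫⁻ x, h x) / c := by
    simp only [div_eq_mul_inv, ← lintegral_mul_const _ hf, ← lintegral_mul_const _ hg,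
      ← lintegral_mul_const _ hh]
    refine combination_lintegral_le_lintegral_real hlam (hf.mul_const _) (hg.mul_const _)
      (hh.mul_const _) ?_ fun x y => ?_
    · rw [← ENNReal.iSup_mul, ← ENNReal.iSup_mul, ENNReal.mul_inv_cancel ha hf_bdd,
        ENNReal.mul_inv_cancel hb hg_bdd]
    · simp only [← div_eq_mul_inv]
      rw [ENNReal.le_div_iff_mul_le (.inl hc_pos.ne') (.inl hc_top.ne)]
      exact (min_div_mul_Mp_le hlam ha hf_bdd hb hg_bdd
        (ne_top_of_le_ne_top hf_bdd (le_iSup f x))).trans (h_mean x y)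
  calc Mp (negInv s) lam (∫⁻ x, f x) (∫⁻ x, g x)
      ≤ c * (ENNReal.ofReal (1 - lam) * ((∫⁻ x, f x) / a) +
          ENNReal.ofReal lam * ((∫⁻ x, g x) / b)) :=
        Mp_negInv_le_mul_combination hlam ha hf_bdd hb hg_bdd
    _ ≤ c * ((∫⁻ x, h x) / c) := by gcongr
    _ = ∫⁻ x, h x := ENNReal.mul_div_cancel hc_pos.ne' hc_top.ne

lemma tendsto_lintegral_min_natCast {α : Type*} [MeasurableSpace α] (ν : Measure α)
    {f : α → ℝ≥0∞} (hf : Measurable f) :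
    Tendsto (fun N : ℕ => ∫⁻ x, min (f x) N ∂ν) atTop (𝓝 (∫⁻ x, f x ∂ν)) := by
  refine lintegral_tendsto_of_tendsto_of_monotone
    (fun N => (hf.min measurable_const).aemeasurable)
    (ae_of_all _ fun x M N hMN => min_le_min_left _ (Nat.cast_le.2 hMN)) (ae_of_all _ fun x => ?_)
  simpa using (tendsto_const_nhds (x := f x)).min ENNReal.tendsto_nat_nhds_top

lemma borellBrascampLieb_real (hlam : lam ∈ Ioo (0 : ℝ) 1) :
    BorellBrascampLieb lam (volume : Measure ℝ) 1 := by
  intro s f g h hf hg hh h_mean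
  have h_lim := ((continuous_Mp_negInv (s := s) hlam).tendsto _).comp
    ((tendsto_lintegral_min_natCast volume hf).prodMk_nhds
      (tendsto_lintegral_min_natCast volume hg))
  refine le_of_tendsto' h_lim fun N => ?_
  have h_bdd (u : ℝ → ℝ≥0∞) : ⨆ x, min (u x) N ≠ ∞ :=
    ne_top_of_le_ne_top (ENNReal.natCast_ne_top N) (iSup_le fun x => min_le_right _ _)
  exact Mp_lintegral_le_lintegral_of_iSup_ne_top hlam (hf.min measurable_const)
    (hg.min measurable_const) hh (h_bdd f) (h_bdd g)
    fun x y => (Mp_mono hlam (min_le_left _ _) (min_le_left _ _)).trans (h_mean x y)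

lemma BorellBrascampLieb.prod {V W : Type*} [AddCommGroup V] [Module ℝ V] [MeasurableSpace V]
    [AddCommGroup W] [Module ℝ W] [MeasurableSpace W] {ν : Measure V} {κ : Measure W}
    [SFinite κ] {d e : ℝ≥0} (hν : BorellBrascampLieb lam ν d) (hκ : BorellBrascampLieb lam κ e) :
    BorellBrascampLieb lam (ν.prod κ) (d + e) := by
  intro s f g h hf hg hh h_mean
  rw [lintegral_prod _ hf.aemeasurable, lintegral_prod _ hg.aemeasurable,
    lintegral_prod _ hh.aemeasurable]
  refine hν s hf.lintegral_prod_right' hg.lintegral_prod_right' hh.lintegral_prod_right'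
    fun x x' => ?_
  refine hκ (s + d) (hf.comp measurable_prodMk_left) (hg.comp measurable_prodMk_left)
    (hh.comp measurable_prodMk_left) fun y y' => ?_
  rw [add_assoc]
  exact h_mean (x, y) (x', y')

lemma BorellBrascampLieb.of_continuousLinearEquiv {V W : Type*} [NormedAddCommGroup V]
    [NormedSpace ℝ V] [FiniteDimensional ℝ V] [MeasurableSpace V] [BorelSpace V]
    [NormedAddCommGroup W] [NormedSpace ℝ W] [MeasurableSpace W] [BorelSpace W] (L : W ≃L[ℝ] V)
    {κ : Measure W} [κ.IsAddHaarMeasure] {d : ℝ≥0} (hκ : BorellBrascampLieb lam κ d)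
    (ν : Measure V) [ν.IsAddHaarMeasure] : BorellBrascampLieb lam ν d := by
  intro s f g h hf hg hh h_mean
  have hL : Measurable L := L.continuous.measurable
  obtain ⟨c, hc⟩ := exists_lintegral_eq_mul_lintegral_comp L κ ν
  rw [hc f hf, hc g hg, hc h hh]
  rcases eq_or_ne c 0 with rfl | hc₀
  · simp [Mp_eq_zero]
  rw [Mp_const_mul (by exact_mod_cast hc₀) ENNReal.coe_ne_top]
  gcongr
  refine hκ s (hf.comp hL) (hg.comp hL) (hh.comp hL) fun x y => ?_
  simpa only [map_add, map_smul] using h_mean (L x) (L y)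

lemma borellBrascampLieb_pi (hlam : lam ∈ Ioo (0 : ℝ) 1) (m : ℕ) :
    BorellBrascampLieb lam (volume : Measure (Fin m → ℝ)) m := by
  induction m with
  | zero =>
    intro s f g h _ _ _ h_mean
    rw [Measure.volume_pi_eq_dirac 0]
    simpa using h_mean 0 0
  | succ m ih =>
    let L : ((Fin m → ℝ) × ℝ) ≃L[ℝ] (Fin (m + 1) → ℝ) :=
      ContinuousLinearEquiv.ofFinrankEq (by simp)
    rw [Nat.cast_succ]
    exact (ih.prod (borellBrascampLieb_real hlam)).of_continuousLinearEquiv L volume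

theorem borellBrascampLieb_finrank {V : Type*} [NormedAddCommGroup V] [NormedSpace ℝ V]
    [FiniteDimensional ℝ V] [MeasurableSpace V] [BorelSpace V] (hlam : lam ∈ Ioo (0 : ℝ) 1)
    (ν : Measure V) [ν.IsAddHaarMeasure] : BorellBrascampLieb lam ν (Module.finrank ℝ V) :=
  (borellBrascampLieb_pi hlam (Module.finrank ℝ V)).of_continuousLinearEquiv
    (ContinuousLinearEquiv.ofFinrankEq (Module.finrank_fin_fun ℝ)) ν

end BorellBrascampLieb

section Marginal

variable {E : Type*} [NormedAddCommGroup E] [InnerProductSpace ℝ E] [MeasurableSpace E]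
  [BorelSpace E] {H : Submodule ℝ E} {F : E → ℝ≥0∞} {S : Set E}

/-- The marginal over `H` of the measure with density `F`: the integral of `F` over the part of `S`
in the affine subspace `y + H`. The Lebesgue measure of `y + H` is the Hausdorff measure of
dimension `finrank H`. -/
def marginal (H : Submodule ℝ E) (F : E → ℝ≥0∞) (S : Set E) (y : Hᗮ) : ℝ≥0∞ :=
  ∫⁻ z in S ∩ {z | z - (y : E) ∈ H}, F z ∂μH[(Module.finrank ℝ H : ℝ)]

lemma marginal_eq_lintegral_indicator (hF : Measurable F) (hS : MeasurableSet S) (y : Hᗮ) :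
    marginal H F S y = ∫⁻ w : H, S.indicator F (y + w) ∂μH[(Module.finrank ℝ H : ℝ)] := by
  have h_iso : Isometry fun w : H => (y + w : E) :=
    (isometry_add_left (y : E)).comp isometry_subtype_coe
  have h_range : range (fun w : H => (y + w : E)) = {z | z - (y : E) ∈ H} := by
    ext z
    refine ⟨?_, fun hz => ⟨⟨z - y, hz⟩, add_sub_cancel _ _⟩⟩
    rintro ⟨w, rfl⟩
    simp
  rw [marginal, ← h_range, ← Measure.restrict_restrict hS,
    ← h_iso.map_hausdorffMeasure (.inl (Nat.cast_nonneg _)), ← lintegral_indicator hS,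
    lintegral_map (hF.indicator hS) h_iso.continuous.measurable]

variable [FiniteDimensional ℝ E]

lemma measurable_indicator_add (hF : Measurable F) (hS : MeasurableSet S) :
    Measurable fun q : Hᗮ × H => S.indicator F (q.1 + q.2) :=
  (hF.indicator hS).comp (by fun_prop)

lemma measurable_marginal (hF : Measurable F) (hS : MeasurableSet S) :
    Measurable (marginal H F S) := by
  simp only [funext (marginal_eq_lintegral_indicator hF hS)]
  exact (measurable_indicator_add hF hS).lintegral_prod_right'

lemma exists_setLIntegral_eq_mul_lintegral_marginal (H : Submodule ℝ E) (ν : Measure E)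
    [ν.IsAddHaarMeasure] (κ : Measure Hᗮ) [κ.IsAddHaarMeasure] :
    ∃ c : ℝ≥0, ∀ ⦃F : E → ℝ≥0∞⦄ ⦃S : Set E⦄, Measurable F → MeasurableSet S →
      ∫⁻ x in S, F x ∂ν = c * ∫⁻ y, marginal H F S y ∂κ := by
  let T : (Hᗮ × H) ≃L[ℝ] E :=
    (Submodule.prodEquivOfIsCompl Hᗮ H H.isCompl_orthogonal.symm).toContinuousLinearEquiv
  obtain ⟨c, hc⟩ := exists_lintegral_eq_mul_lintegral_comp T
    (κ.prod μH[(Module.finrank ℝ H : ℝ)]) ν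
  refine ⟨c, fun F S hF hS => ?_⟩
  simp only [marginal_eq_lintegral_indicator hF hS]
  rw [← lintegral_indicator hS, hc _ (hF.indicator hS)]
  exact congrArg _ (lintegral_prod _ (measurable_indicator_add hF hS).aemeasurable)

end Marginal

section PConcaveDensity

variable {lam : ℝ}

lemma PConcaveFn.Mp_indicator_le_indicator {V : Type*} [AddCommGroup V] [Module ℝ V] {p : EReal}
    {φ : V → ℝ} (hφ : PConcaveFn p φ) (hφ₀ : ∀ x, 0 ≤ φ x) (hlam : lam ∈ Ioo (0 : ℝ) 1)
    {A B C : Set V} (hC : (1 - lam) • A + lam • B ⊆ C) (x y : V) :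
    Mp p lam (A.indicator (fun z => ENNReal.ofReal (φ z)) x)
      (B.indicator (fun z => ENNReal.ofReal (φ z)) y) ≤
      C.indicator (fun z => ENNReal.ofReal (φ z)) ((1 - lam) • x + lam • y) := by
  by_cases hx : x ∈ A
  case neg => simp [hx, Mp_eq_zero]
  by_cases hy : y ∈ B
  case neg => simp [hy, Mp_eq_zero]
  have hxy : (1 - lam) • x + lam • y ∈ C :=
    hC (add_mem_add (smul_mem_smul_set hx) (smul_mem_smul_set hy))
  rw [indicator_of_mem hx, indicator_of_mem hy, indicator_of_mem hxy,
    Mp_ofReal hlam (hφ₀ x) (hφ₀ y)]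
  exact ENNReal.ofReal_le_ofReal (hφ x y lam hlam)

variable {E : Type*} [NormedAddCommGroup E] [InnerProductSpace ℝ E] [FiniteDimensional ℝ E]
  [MeasurableSpace E] [BorelSpace E] {H : Submodule ℝ E} {φ : E → ℝ} {A B : Set E}

lemma PConcaveFn.min_marginal_le_marginal (hφ : PConcaveFn (negInv (Module.finrank ℝ H)) φ)
    (hφ₀ : ∀ x, 0 ≤ φ x) (hφm : Measurable φ) (hlam : lam ∈ Ioo (0 : ℝ) 1) {C : Set E}
    (hA : MeasurableSet A) (hB : MeasurableSet B) (hC : MeasurableSet C)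
    (hABC : (1 - lam) • A + lam • B ⊆ C) (y y' : Hᗮ) :
    min (marginal H (fun z => ENNReal.ofReal (φ z)) A y)
      (marginal H (fun z => ENNReal.ofReal (φ z)) B y') ≤
      marginal H (fun z => ENNReal.ofReal (φ z)) C ((1 - lam) • y + lam • y') := by
  have hF : Measurable fun z => ENNReal.ofReal (φ z) := hφm.ennreal_ofReal
  simp only [marginal_eq_lintegral_indicator hF, hA, hB, hC]
  rw [← Mp_bot, ← negInv_zero]
  refine borellBrascampLieb_finrank hlam _ 0
    ((measurable_indicator_add hF hA).comp measurable_prodMk_left)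
    ((measurable_indicator_add hF hB).comp measurable_prodMk_left)
    ((measurable_indicator_add hF hC).comp measurable_prodMk_left) fun w w' => ?_
  have h_fibre : (((1 - lam) • y + lam • y' : Hᗮ) + ((1 - lam) • w + lam • w' : H) : E) =
      (1 - lam) • (y + w : E) + lam • (y' + w' : E) := by
    push_cast
    module
  rw [zero_add]
  simpa only [h_fibre] using hφ.Mp_indicator_le_indicator hφ₀ hlam hABC (y + w : E) (y' + w')

theorem statement15_general (ν : Measure E) [ν.IsAddHaarMeasure] (hH : Module.finrank ℝ Hᗮ = 1)
    {p : EReal} (hp : negInv (Module.finrank ℝ H) ≤ p) (hφ₀ : ∀ x, 0 ≤ φ x) (hφm : Measurable φ)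
    (hφ : PConcaveFn p φ) (hlam : lam ∈ Ioo (0 : ℝ) 1) (hA : MeasurableSet A)
    (hB : MeasurableSet B)
    (h_sup : ⨆ y, marginal H (fun x => ENNReal.ofReal (φ x)) A y =
      ⨆ y, marginal H (fun x => ENNReal.ofReal (φ x)) B y) :
    ENNReal.ofReal (1 - lam) * ν.withDensity (fun x => ENNReal.ofReal (φ x)) A +
        ENNReal.ofReal lam * ν.withDensity (fun x => ENNReal.ofReal (φ x)) B ≤
      ν.withDensity (fun x => ENNReal.ofReal (φ x)) ((1 - lam) • A + lam • B) := by
  set F : E → ℝ≥0∞ := fun x => ENNReal.ofReal (φ x)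
  have hF : Measurable F := hφm.ennreal_ofReal
  let C := toMeasurable (ν.withDensity F) ((1 - lam) • A + lam • B)
  have hC : MeasurableSet C := measurableSet_toMeasurable _ _
  have h_min := (hφ.mono_exponent hφ₀ hp).min_marginal_le_marginal hφ₀ hφm hlam hA hB hC
    (subset_toMeasurable _ _)
  have h_linear := combination_lintegral_le_lintegral_of_finrank_eq_one hlam hH
    μH[(Module.finrank ℝ Hᗮ : ℝ)] (measurable_marginal hF hA) (measurable_marginal hF hB)
    (measurable_marginal hF hC) h_sup h_min
  obtain ⟨c, h_fubini⟩ := exists_setLIntegral_eq_mul_lintegral_marginal H ν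
    μH[(Module.finrank ℝ Hᗮ : ℝ)]
  rw [← measure_toMeasurable ((1 - lam) • A + lam • B), withDensity_apply _ hA,
    withDensity_apply _ hB, withDensity_apply _ hC, h_fubini hF hA, h_fubini hF hB,
    h_fubini hF hC, mul_left_comm, mul_left_comm (ENNReal.ofReal lam), ← mul_add]
  gcongr

end PConcaveDensity

/-- Theorem `t:BM_lineal_med_2`: linear Brunn–Minkowski inequality for a
measure on `ℝⁿ` with `p`-concave density (`-1/n ≤ p ≤ ∞`) and sets having equal maximal
marginal measure sections with respect to a linear hyperplane `H`. The `(n-1)`-dimensional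
Lebesgue measure on affine hyperplanes is realized as the `(n-1)`-dimensional Hausdorff
measure. -/
theorem statement15 {n : ℕ} (hn : 0 < n)
    (p : EReal) (hp : ((-1/(n:ℝ) : ℝ) : EReal) ≤ p)
    (φ : EuclideanSpace ℝ (Fin n) → ℝ) (hφ0 : ∀ x, 0 ≤ φ x) (hφmeas : Measurable φ)
    (hφconc : PConcaveFn p φ)
    (μ : Measure (EuclideanSpace ℝ (Fin n)))
    (hμ : μ = (volume : Measure (EuclideanSpace ℝ (Fin n))).withDensity
      fun x => ENNReal.ofReal (φ x))
    (H : Submodule ℝ (EuclideanSpace ℝ (Fin n))) (hH : Module.finrank ℝ H = n - 1)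
    (lam : ℝ) (hlam : lam ∈ Ioo (0:ℝ) 1)
    (A B : Set (EuclideanSpace ℝ (Fin n))) (hA : A.Nonempty) (hB : B.Nonempty)
    (hAm : MeasurableSet A) (hBm : MeasurableSet B)
    (hCm : MeasurableSet ((1 - lam) • A + lam • B))
    (hsup : (⨆ y : Hᗮ, ∫⁻ z in A ∩ {z | z - (y : EuclideanSpace ℝ (Fin n)) ∈ H},
              ENNReal.ofReal (φ z) ∂(μH[((n:ℝ) - 1)]))
          = ⨆ y : Hᗮ, ∫⁻ z in B ∩ {z | z - (y : EuclideanSpace ℝ (Fin n)) ∈ H},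
              ENNReal.ofReal (φ z) ∂(μH[((n:ℝ) - 1)])) :
    ENNReal.ofReal (1 - lam) * μ A + ENNReal.ofReal lam * μ B
      ≤ μ ((1 - lam) • A + lam • B) := by
  obtain ⟨m, rfl⟩ : ∃ m, n = m + 1 := ⟨n - 1, by lia⟩
  have h_rank : Module.finrank ℝ H = m := hH
  have h_orth : Module.finrank ℝ Hᗮ = 1 := by
    have h_sum := H.finrank_add_finrank_orthogonal
    rw [h_rank, finrank_euclideanSpace_fin] at h_sum
    exact add_left_cancel h_sum
  have h_exponent : negInv (Module.finrank ℝ H) ≤ p := by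
    calc negInv (Module.finrank ℝ H) ≤ negInv (m + 1 : ℕ) :=
          negInv_monotone (by simp [h_rank])
      _ = ((-1 / ((m + 1 : ℕ) : ℝ) : ℝ) : EReal) := by
          rw [negInv_of_ne_zero (by positivity), neg_div, one_div, NNReal.coe_natCast]
      _ ≤ p := hp
  have h_dim : ((m + 1 : ℕ) : ℝ) - 1 = Module.finrank ℝ H := by simp [h_rank]
  rw [h_dim] at hsup
  subst hμ
  exact statement15_general volume h_orth h_exponent hφ0 hφmeas hφconc hlam hAm hBm hsup

end
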